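/- Let W be a graphon, k ≥ 1 an integer, δ > 0, and P a measurable partition of [0,1] into k sets each of Lebesgue measure 1/k. Then limsup_{n→∞} (log₂ N_□(n,δ;W)) / C(n,2) ≤ Ent(E[W|P]) + h̃(4k²δ), where C(n,2) = n(n-1)/2. -/

import Mathlib

open MeasureTheory Set Filter

noncomputable section

/-- A graphon: a symmetric measurable function `ℝ → ℝ → ℝ` with values in `[0,1]`
(only its values on `[0,1]²` matter). -/
def IsGraphon (W : ℝ → ℝ → ℝ) : Prop :=
  (∀ x y, W x y = W y x) ∧ Measurable (Function.uncurry W) ∧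
    ∀ x y, W x y ∈ Set.Icc (0 : ℝ) 1

/-- The cut norm `‖U‖_□`, the supremum over measurable `S, T ⊆ [0,1]` of
`|∫_{S×T} U|`. -/
def cutNorm (U : ℝ → ℝ → ℝ) : ℝ :=
  sSup { r : ℝ | ∃ S T : Set ℝ, MeasurableSet S ∧ MeasurableSet T ∧
    S ⊆ Set.Icc 0 1 ∧ T ⊆ Set.Icc 0 1 ∧
    r = |∫ p in S ×ˢ T, U p.1 p.2| }

/-- `d_□(W₁, W₂) = ‖W₁ - W₂‖_□`. -/
def dCut (W₁ W₂ : ℝ → ℝ → ℝ) : ℝ := cutNorm (fun x y => W₁ x y - W₂ x y)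

/-- A Lebesgue-measure-preserving map `[0,1] → [0,1]`. -/
def IsMPSelf (σ : ℝ → ℝ) : Prop :=
  MeasureTheory.MeasurePreserving σ
      (MeasureTheory.volume.restrict (Set.Icc (0:ℝ) 1))
      (MeasureTheory.volume.restrict (Set.Icc (0:ℝ) 1)) ∧
    Set.MapsTo σ (Set.Icc (0:ℝ) 1) (Set.Icc (0:ℝ) 1)

/-- The cut distance `δ_□(W₁, W₂)`. -/
def deltaCut (W₁ W₂ : ℝ → ℝ → ℝ) : ℝ :=
  sInf { r : ℝ | ∃ σ₁ σ₂ : ℝ → ℝ, IsMPSelf σ₁ ∧ IsMPSelf σ₂ ∧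
    r = cutNorm (fun x y => W₁ (σ₁ x) (σ₁ y) - W₂ (σ₂ x) (σ₂ y)) }

/-- The binary entropy function `h` (base-2 logarithm; `logb 2 0 = 0` by convention,
so `h 0 = h 1 = 0`). -/
def binEnt (x : ℝ) : ℝ := -x * Real.logb 2 x - (1 - x) * Real.logb 2 (1 - x)

/-- `h̃ x = h (min x (1/2))`. -/
def htilde (x : ℝ) : ℝ := binEnt (min x (1/2))

/-- The entropy `Ent(W) = ∫₀¹∫₀¹ h(W(x,y)) dx dy` of a graphon. -/
def graphonEnt (W : ℝ → ℝ → ℝ) : ℝ :=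
  ∫ x in Set.Icc (0:ℝ) 1, ∫ y in Set.Icc (0:ℝ) 1, binEnt (W x y)

open Classical in
/-- The graphon `W_G` of a simple graph `G` on `{1, …, n}` (vertices as `Fin n`,
vertex `i : Fin n` representing `i+1`): `W_G x y = 1` iff `⌈nx⌉⌈ny⌉ ∈ E(G)`. -/
def graphonOfGraph {n : ℕ} (G : SimpleGraph (Fin n)) : ℝ → ℝ → ℝ := fun x y =>
  if ∃ i j : Fin n, G.Adj i j ∧ ⌈(n : ℝ) * x⌉ = ((i : ℕ) : ℤ) + 1 ∧
      ⌈(n : ℝ) * y⌉ = ((j : ℕ) : ℤ) + 1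
  then 1 else 0

/-- A labelled graph class: a set of graphs on `{1,…,n}` for each `n`. -/
abbrev GraphClass := ∀ n : ℕ, Set (SimpleGraph (Fin n))

/-- A graph class is closed under relabelling by permutations. -/
def IsGraphClass (Q : GraphClass) : Prop :=
  ∀ (n : ℕ) (π : Equiv.Perm (Fin n)) (G : SimpleGraph (Fin n)),
    G ∈ Q n → G.comap ⇑π ∈ Q n

/-- A hereditary graph class: a graph class closed under taking induced subgraphs
(relabelled by the order-preserving bijection). -/
def IsHereditary (Q : GraphClass) : Prop :=
  IsGraphClass Q ∧
    ∀ (m n : ℕ) (f : Fin m → Fin n), StrictMono f →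
      ∀ G ∈ Q n, G.comap f ∈ Q m

/-- `Q̂`: the set of graphons which are limits (in cut distance) of sequences of graphs in
the class `Q` whose orders tend to infinity. -/
def limitSet (Q : GraphClass) : Set (ℝ → ℝ → ℝ) :=
  { W | IsGraphon W ∧
    ∃ (nk : ℕ → ℕ) (Gk : ∀ k, SimpleGraph (Fin (nk k))),
      (∀ k, Gk k ∈ Q (nk k)) ∧ Filter.Tendsto nk Filter.atTop Filter.atTop ∧
      Filter.Tendsto (fun k => deltaCut (graphonOfGraph (Gk k)) W) Filter.atTop (nhds 0) }

/-- `C(n,2) = n(n-1)/2` as a real number. -/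
def choose2 (n : ℕ) : ℝ := (n : ℝ) * ((n : ℝ) - 1) / 2

open Classical in
/-- The step function `E[W | P]` obtained by averaging `W` over the products of the
parts of the partition `P` of `[0,1]`. -/
def condExpPart {k : ℕ} (P : Fin k → Set ℝ) (W : ℝ → ℝ → ℝ) : ℝ → ℝ → ℝ := fun x y =>
  ∑ i : Fin k, ∑ j : Fin k,
    if x ∈ P i ∧ y ∈ P j then ⨍ p in (P i) ×ˢ (P j), W p.1 p.2 else 0

/-- `W̄_n`: the step function of `W` for the partition of `[0,1]` into `n` consecutive
intervals of length `1/n`. -/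
def barStep (n : ℕ) (W : ℝ → ℝ → ℝ) : ℝ → ℝ → ℝ :=
  condExpPart (fun i : Fin n => Set.Ioc (((i : ℕ) : ℝ)/n) ((((i : ℕ) : ℝ) + 1)/n)) W

/-- `N̂_□(n, δ; W)`: the number of graphs `G` on `{1,…,n}` with `d_□(W_G, W) ≤ δ`. -/
def NhatCut (n : ℕ) (δ : ℝ) (W : ℝ → ℝ → ℝ) : ℕ :=
  Nat.card {G : SimpleGraph (Fin n) // dCut (graphonOfGraph G) W ≤ δ}

/-- `N_□(n, δ; W)`: the number of graphs `G` on `{1,…,n}` with `δ_□(W_G, W) ≤ δ`. -/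
def NCut (n : ℕ) (δ : ℝ) (W : ℝ → ℝ → ℝ) : ℕ :=
  Nat.card {G : SimpleGraph (Fin n) // deltaCut (graphonOfGraph G) W ≤ δ}

open Classical in
/-- The induced density `p(F; W)` of a graph `F` on `{1,…,k}` in a graphon `W`. -/
def inducedDensity {k : ℕ} (F : SimpleGraph (Fin k)) (W : ℝ → ℝ → ℝ) : ℝ :=
  ∫ x : Fin k → ℝ in Set.univ.pi (fun _ : Fin k => Set.Icc (0:ℝ) 1),
    ∏ i : Fin k, ∏ j : Fin k,
      if i < j then (if F.Adj i j then W (x i) (x j) else 1 - W (x i) (x j)) else 1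

open Classical in
/-- The randomness support graphon `1_{rand(W)}` of `W`. -/
def randIndicator (W : ℝ → ℝ → ℝ) : ℝ → ℝ → ℝ := fun x y =>
  if 0 < W x y ∧ W x y < 1 then 1 else 0

/-- A kernel `U` is `K_r`-free if `∏_{i<j} U(x_i, x_j) = 0` for a.e. `x ∈ [0,1]^r`. -/
def KFree (r : ℕ) (U : ℝ → ℝ → ℝ) : Prop :=
  ∀ᵐ x ∂(MeasureTheory.volume.restrict (Set.univ.pi fun _ : Fin r => Set.Icc (0:ℝ) 1)),
    (∏ i : Fin r, ∏ j : Fin r, if i < j then U (x i) (x j) else 1) = 0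

open Classical in
/-- The graphon `W^{(r,s)}`: equal to `1/2` off the diagonal blocks, `1` on the first `s`
diagonal blocks `I_i × I_i`, and `0` on the remaining diagonal blocks. -/
def Wrs (r s : ℕ) : ℝ → ℝ → ℝ := fun x y =>
  if ∃ i j : Fin r, i ≠ j ∧ x ∈ Set.Ioc (((i:ℕ):ℝ)/r) ((((i:ℕ):ℝ)+1)/r) ∧
      y ∈ Set.Ioc (((j:ℕ):ℝ)/r) ((((j:ℕ):ℝ)+1)/r)
  then 1/2
  else if ∃ i : Fin r, (i:ℕ) < s ∧ x ∈ Set.Ioc (((i:ℕ):ℝ)/r) ((((i:ℕ):ℝ)+1)/r) ∧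
      y ∈ Set.Ioc (((i:ℕ):ℝ)/r) ((((i:ℕ):ℝ)+1)/r)
  then 1 else 0

/-- `E_r = ⋃_{i ≠ j} I_i × I_j` where `I_i`, `i = 1, …, r`, are the consecutive
intervals of length `1/r` in `[0,1]`. -/
def Er (r : ℕ) : Set (ℝ × ℝ) :=
  ⋃ (i : Fin r) (j : Fin r) (_ : i ≠ j),
    (Set.Ioc (((i:ℕ):ℝ)/r) ((((i:ℕ):ℝ)+1)/r)) ×ˢ (Set.Ioc (((j:ℕ):ℝ)/r) ((((j:ℕ):ℝ)+1)/r))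

/-- `R_r`: the set of graphons equal to `1/2` on `E_r` and `{0,1}`-valued elsewhere
on `[0,1]²`. -/
def Rset (r : ℕ) : Set (ℝ → ℝ → ℝ) :=
  { W | IsGraphon W ∧ (∀ p ∈ Er r, W p.1 p.2 = 1/2) ∧
      ∀ p ∈ ((Set.Icc (0:ℝ) 1) ×ˢ (Set.Icc (0:ℝ) 1)) \ Er r,
        W p.1 p.2 = 0 ∨ W p.1 p.2 = 1 }

/-- A graphon is random-free if it is `{0,1}`-valued a.e. on `[0,1]²`. -/
def IsRandomFree (W : ℝ → ℝ → ℝ) : Prop :=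
  ∀ᵐ p ∂(MeasureTheory.volume.restrict ((Set.Icc (0:ℝ) 1) ×ˢ (Set.Icc (0:ℝ) 1))),
    W (Prod.fst p) (Prod.snd p) = 0 ∨ W (Prod.fst p) (Prod.snd p) = 1

open scoped Finset BigOperators

/-!
If `δ_□(W_G, W) < η`, then overlaying the `n` vertex intervals of `W_G` with the parts of `P` gives
a fractional partition of the vertices of `G` for which each of the `k²` block densities of `G` is
within `η` of that of `W`, weighted by the size of the block. The set of the fractional partitions
rounded to precision `1/M` has size `(M + 1)^(kn) = 2^o(n²)`, so it suffices to count the graphs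
with one given fractional partition. By subadditivity of entropy, the logarithm of their number is
at most the sum over the pairs of vertices of the binary entropy of the frequency of that pair. By
concavity of `h` within each block, `h(x) ≤ h(y) + h̃(|x - y|)` and concavity of `h̃` over the
blocks, this sum is at most `n²/2 · (Ent(E[W|P]) + h̃(k²η + 2k/M))`. Finally let `n → ∞`, then
`M → ∞` and `η → δ`.
-/

section BinaryEntropy

lemma binEnt_eq_binEntropy_div (x : ℝ) : binEnt x = Real.binEntropy x / Real.log 2 := by
  simp only [binEnt, Real.binEntropy, Real.logb, Real.log_inv]
  ring

lemma binEnt_zero : binEnt 0 = 0 := by simp [binEnt]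

lemma binEnt_one_sub (x : ℝ) : binEnt (1 - x) = binEnt x := by
  simp only [binEnt_eq_binEntropy_div, Real.binEntropy_one_sub]

lemma binEnt_nonneg {x : ℝ} (hx : x ∈ Icc (0 : ℝ) 1) : 0 ≤ binEnt x := by
  rw [binEnt_eq_binEntropy_div]
  exact div_nonneg (Real.binEntropy_nonneg hx.1 hx.2) (Real.log_nonneg one_le_two)

lemma binEnt_le_one (x : ℝ) : binEnt x ≤ 1 := by
  rw [binEnt_eq_binEntropy_div]
  exact div_le_one_of_le₀ Real.binEntropy_le_log_two (Real.log_nonneg one_le_two)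

lemma continuous_binEnt : Continuous binEnt := by
  simp only [funext binEnt_eq_binEntropy_div]
  exact Real.binEntropy_continuous.div_const _

lemma concaveOn_binEnt : ConcaveOn ℝ (Icc 0 1) binEnt := by
  have h := Real.strictConcave_binEntropy.concaveOn.smul
    (inv_nonneg.2 (Real.log_nonneg one_le_two))
  refine h.congr fun x _ => ?_
  change (Real.log 2)⁻¹ • Real.binEntropy x = binEnt x
  rw [binEnt_eq_binEntropy_div, smul_eq_mul, div_eq_inv_mul]

lemma monotoneOn_binEnt : MonotoneOn binEnt (Icc 0 (1 / 2)) := by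
  intro x hx y hy hxy
  simp only [binEnt_eq_binEntropy_div]
  rw [one_div] at hx hy
  exact div_le_div_of_nonneg_right (Real.binEntropy_strictMonoOn.monotoneOn hx hy hxy)
    (Real.log_nonneg one_le_two)

lemma min_half_mem_Icc {x : ℝ} (hx : 0 ≤ x) : min x (1 / 2) ∈ Icc (0 : ℝ) (1 / 2) :=
  ⟨le_min hx (by norm_num), min_le_right _ _⟩

lemma htilde_nonneg {x : ℝ} (hx : 0 ≤ x) : 0 ≤ htilde x :=
  binEnt_nonneg (Icc_subset_Icc_right (by norm_num) (min_half_mem_Icc hx))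

lemma continuous_htilde : Continuous htilde :=
  continuous_binEnt.comp (continuous_id.min continuous_const)

lemma htilde_le_htilde {x y : ℝ} (hx : 0 ≤ x) (hxy : x ≤ y) : htilde x ≤ htilde y :=
  monotoneOn_binEnt (min_half_mem_Icc hx) (min_half_mem_Icc (hx.trans hxy))
    (min_le_min_right _ hxy)

lemma concaveOn_htilde : ConcaveOn ℝ (Ici 0) htilde := by
  have himage : (fun x : ℝ => min x (1 / 2)) '' Ici 0 = Icc 0 (1 / 2) := by
    refine Subset.antisymm (image_subset_iff.2 fun x hx => min_half_mem_Icc hx) fun x hx => ?_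
    exact ⟨x, hx.1, min_eq_left hx.2⟩
  have hmin : ConcaveOn ℝ (Ici 0) fun x : ℝ => min x (1 / 2) :=
    (concaveOn_id (convex_Ici 0)).inf (concaveOn_const _ (convex_Ici 0))
  refine ConcaveOn.comp (g := binEnt) ?_ hmin ?_ <;> rw [himage]
  · exact concaveOn_binEnt.subset (Icc_subset_Icc_right (by norm_num)) (convex_Icc _ _)
  · exact monotoneOn_binEnt

lemma add_le_of_concaveOn_Icc {f : ℝ → ℝ} {c x y : ℝ} (hf : ConcaveOn ℝ (Icc 0 c) f)
    (hf0 : 0 ≤ f 0) (hx : 0 ≤ x) (hy : 0 ≤ y) (hxy : x + y ≤ c) : f (x + y) ≤ f x + f y := by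
  rcases (add_nonneg hx hy).eq_or_lt with hzero | hpos
  · obtain rfl : x = 0 := by linarith
    obtain rfl : y = 0 := by linarith
    simpa using hf0
  have hchord : ∀ t, 0 ≤ t → t ≤ x + y → t / (x + y) * f (x + y) ≤ f t := fun t ht htxy => by
    have h := hf.2 ⟨hpos.le, hxy⟩ ⟨le_rfl, hpos.le.trans hxy⟩ (div_nonneg ht hpos.le)
      (sub_nonneg.2 ((div_le_one hpos).2 htxy)) (add_sub_cancel _ _)
    simp only [smul_eq_mul, mul_zero, add_zero, div_mul_cancel₀ _ hpos.ne'] at h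
    have := mul_nonneg (sub_nonneg.2 ((div_le_one hpos).2 htxy)) hf0
    linarith
  calc f (x + y) = x / (x + y) * f (x + y) + y / (x + y) * f (x + y) := by field_simp
    _ ≤ f x + f y := add_le_add (hchord x hx (by linarith)) (hchord y hy (by linarith))

lemma binEnt_le_binEnt_add_htilde {x y : ℝ} (hx : x ∈ Icc (0 : ℝ) 1) (hy : y ∈ Icc (0 : ℝ) 1) :
    binEnt x ≤ binEnt y + htilde |x - y| := by
  have hadd {u v : ℝ} (hu : 0 ≤ u) (hv : 0 ≤ v) (huv : u + v ≤ 1) :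
      binEnt (u + v) ≤ binEnt u + binEnt v :=
    add_le_of_concaveOn_Icc concaveOn_binEnt binEnt_zero.ge hu hv huv
  rcases le_total |x - y| (1 / 2) with hsmall | hlarge
  · rw [htilde, min_eq_left hsmall]
    rcases le_total y x with hyx | hxy
    · have h := hadd hy.1 (sub_nonneg.2 hyx) (by linarith [hx.2])
      rwa [add_sub_cancel, ← abs_of_nonneg (sub_nonneg.2 hyx)] at h
    · have h := hadd (sub_nonneg.2 hy.2) (sub_nonneg.2 hxy) (by linarith [hx.1])
      rwa [sub_add_sub_cancel, binEnt_one_sub, binEnt_one_sub, ← abs_of_nonneg (sub_nonneg.2 hxy),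
        abs_sub_comm] at h
  · have hhalf : binEnt (1 / 2) = 1 := by
      rw [binEnt_eq_binEntropy_div, one_div, Real.binEntropy_two_inv,
        div_self (Real.log_pos one_lt_two).ne']
    rw [htilde, min_eq_right hlarge, hhalf]
    linarith [binEnt_le_one x, binEnt_nonneg hy]

-- When `∑ w = 0` the quotient is the junk value `0`, but then both sides vanish.
lemma sum_mul_le_of_concaveOn {ι : Type*} {t : Finset ι} {s : Set ℝ} {f : ℝ → ℝ} {w x : ι → ℝ}
    (hf : ConcaveOn ℝ s f) (hw : ∀ i ∈ t, 0 ≤ w i) (hx : ∀ i ∈ t, x i ∈ s) :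
    ∑ i ∈ t, w i * f (x i) ≤ (∑ i ∈ t, w i) * f ((∑ i ∈ t, w i * x i) / ∑ i ∈ t, w i) := by
  rcases (Finset.sum_nonneg hw).eq_or_lt with hzero | hpos
  · have hw0 := (Finset.sum_eq_zero_iff_of_nonneg hw).1 hzero.symm
    rw [← hzero, zero_mul, Finset.sum_eq_zero fun i hi => by rw [hw0 i hi, zero_mul]]
  · have h := hf.le_map_centerMass hw hpos hx
    simp only [Finset.centerMass, smul_eq_mul, Function.comp_apply, ← div_eq_inv_mul] at h
    rwa [div_le_iff₀' hpos] at h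

end BinaryEntropy

section Subadditivity

variable {α : Type*} [DecidableEq α]

/-- The proportion of the sets in `𝒜` containing `a`, i.e. the marginal probability at `a` of a
uniformly random member of `𝒜`. -/
def memberFreq (𝒜 : Finset (Finset α)) (a : α) : ℝ := (#{A ∈ 𝒜 | a ∈ A} : ℝ) / #𝒜

/-- The probability of the outcome `A` for the random set containing each `a` independently with
probability `p a`. -/
def bernoulliWeight [Fintype α] (p : α → ℝ) (A : Finset α) : ℝ :=
  (∏ a ∈ A, p a) * ∏ a ∈ Aᶜ, (1 - p a)

lemma one_sub_memberFreq {𝒜 : Finset (Finset α)} (h𝒜 : 𝒜.Nonempty) (a : α) :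
    1 - memberFreq 𝒜 a = (#{A ∈ 𝒜 | a ∉ A} : ℝ) / #𝒜 := by
  have hcard : (#𝒜 : ℝ) ≠ 0 := by exact_mod_cast h𝒜.card_ne_zero
  rw [memberFreq, sub_eq_iff_eq_add, ← add_div, eq_div_iff hcard, one_mul, add_comm]
  exact_mod_cast (Finset.card_filter_add_card_filter_not (s := 𝒜) fun A : Finset α => a ∈ A).symm

lemma memberFreq_nonneg (𝒜 : Finset (Finset α)) (a : α) : 0 ≤ memberFreq 𝒜 a :=
  div_nonneg (Nat.cast_nonneg _) (Nat.cast_nonneg _)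

lemma memberFreq_pos {𝒜 : Finset (Finset α)} {A : Finset α} {a : α} (hA : A ∈ 𝒜) (ha : a ∈ A) :
    0 < memberFreq 𝒜 a :=
  div_pos (mod_cast Finset.card_pos.2 ⟨A, Finset.mem_filter.2 ⟨hA, ha⟩⟩)
    (mod_cast Finset.card_pos.2 ⟨A, hA⟩)

lemma memberFreq_lt_one {𝒜 : Finset (Finset α)} {A : Finset α} {a : α} (hA : A ∈ 𝒜) (ha : a ∉ A) :
    memberFreq 𝒜 a < 1 := by
  rw [← sub_pos, one_sub_memberFreq ⟨A, hA⟩]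
  exact div_pos (mod_cast Finset.card_pos.2 ⟨A, Finset.mem_filter.2 ⟨hA, ha⟩⟩)
    (mod_cast Finset.card_pos.2 ⟨A, hA⟩)

lemma memberFreq_le_one (𝒜 : Finset (Finset α)) (a : α) : memberFreq 𝒜 a ≤ 1 :=
  div_le_one_of_le₀ (mod_cast Finset.card_filter_le _ _) (Nat.cast_nonneg _)

variable [Fintype α]

lemma sum_bernoulliWeight (p : α → ℝ) : ∑ A, bernoulliWeight p A = 1 := by
  simp only [bernoulliWeight, ← Fintype.prod_add, add_sub_cancel, Finset.prod_const_one]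

lemma bernoulliWeight_memberFreq_pos {𝒜 : Finset (Finset α)} {A : Finset α} (hA : A ∈ 𝒜) :
    0 < bernoulliWeight (memberFreq 𝒜) A :=
  mul_pos (Finset.prod_pos fun _ ha => memberFreq_pos hA ha)
    (Finset.prod_pos fun _ ha => sub_pos.2 (memberFreq_lt_one hA (Finset.mem_compl.1 ha)))

lemma log_bernoulliWeight_memberFreq {𝒜 : Finset (Finset α)} {A : Finset α} (hA : A ∈ 𝒜) :
    Real.log (bernoulliWeight (memberFreq 𝒜) A) =
      ∑ a, if a ∈ A then Real.log (memberFreq 𝒜 a) else Real.log (1 - memberFreq 𝒜 a) := by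
  have hin : ∀ a ∈ A, memberFreq 𝒜 a ≠ 0 := fun _ ha => (memberFreq_pos hA ha).ne'
  have hout : ∀ a ∈ Aᶜ, 1 - memberFreq 𝒜 a ≠ 0 := fun _ ha =>
    (sub_pos.2 (memberFreq_lt_one hA (Finset.mem_compl.1 ha))).ne'
  rw [bernoulliWeight,
    Real.log_mul (Finset.prod_ne_zero_iff.2 hin) (Finset.prod_ne_zero_iff.2 hout),
    Real.log_prod hin, Real.log_prod hout, Finset.sum_ite]
  congr 2 <;> ext a <;> simp

lemma sum_log_bernoulliWeight_memberFreq {𝒜 : Finset (Finset α)} (h𝒜 : 𝒜.Nonempty) :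
    ∑ A ∈ 𝒜, Real.log (bernoulliWeight (memberFreq 𝒜) A) =
      -(#𝒜 * ∑ a, Real.binEntropy (memberFreq 𝒜 a)) := by
  have hcard : (#𝒜 : ℝ) ≠ 0 := by exact_mod_cast h𝒜.card_ne_zero
  rw [Finset.sum_congr rfl fun A hA => log_bernoulliWeight_memberFreq hA, Finset.sum_comm,
    Finset.mul_sum, ← Finset.sum_neg_distrib]
  refine Finset.sum_congr rfl fun a _ => ?_
  have hin : (#{A ∈ 𝒜 | a ∈ A} : ℝ) = #𝒜 * memberFreq 𝒜 a := (mul_div_cancel₀ _ hcard).symm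
  have hout : (#{A ∈ 𝒜 | a ∉ A} : ℝ) = #𝒜 * (1 - memberFreq 𝒜 a) := by
    rw [one_sub_memberFreq h𝒜, mul_div_cancel₀ _ hcard]
  rw [Finset.sum_ite, Finset.sum_const, Finset.sum_const, nsmul_eq_mul, nsmul_eq_mul, hin, hout,
    Real.binEntropy, Real.log_inv, Real.log_inv]
  ring

-- Gibbs' inequality between the uniform distribution on `𝒜` and the product of its marginals.
lemma log_card_le_sum_binEntropy {𝒜 : Finset (Finset α)} (h𝒜 : 𝒜.Nonempty) :
    Real.log #𝒜 ≤ ∑ a, Real.binEntropy (memberFreq 𝒜 a) := by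
  have hcard : (0 : ℝ) < #𝒜 := by exact_mod_cast h𝒜.card_pos
  have hmass : ∑ A ∈ 𝒜, bernoulliWeight (memberFreq 𝒜) A ≤ 1 := by
    rw [← sum_bernoulliWeight (memberFreq 𝒜)]
    refine Finset.sum_le_univ_sum_of_nonneg fun A => mul_nonneg ?_ ?_
    · exact Finset.prod_nonneg fun a _ => memberFreq_nonneg 𝒜 a
    · exact Finset.prod_nonneg fun a _ => sub_nonneg.2 (memberFreq_le_one 𝒜 a)
  have hlog : ∀ A ∈ 𝒜, Real.log #𝒜 + Real.log (bernoulliWeight (memberFreq 𝒜) A) ≤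
      #𝒜 * bernoulliWeight (memberFreq 𝒜) A - 1 := fun A hA => by
    have hpos := bernoulliWeight_memberFreq_pos hA
    rw [← Real.log_mul hcard.ne' hpos.ne']
    exact Real.log_le_sub_one_of_pos (mul_pos hcard hpos)
  have hsum := Finset.sum_le_sum hlog
  rw [Finset.sum_add_distrib, Finset.sum_sub_distrib, ← Finset.mul_sum, Finset.sum_const,
    Finset.sum_const, nsmul_eq_mul, nsmul_eq_mul, sum_log_bernoulliWeight_memberFreq h𝒜] at hsum
  have hscaled : #𝒜 * ∑ A ∈ 𝒜, bernoulliWeight (memberFreq 𝒜) A ≤ (#𝒜 : ℝ) * 1 := by gcongr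
  exact le_of_mul_le_mul_left (by linarith) hcard

lemma logb_card_le_sum_binEnt {𝒜 : Finset (Finset α)} (h𝒜 : 𝒜.Nonempty) :
    Real.logb 2 #𝒜 ≤ ∑ a, binEnt (memberFreq 𝒜 a) := by
  simp only [binEnt_eq_binEntropy_div, ← Finset.sum_div]
  exact div_le_div_of_nonneg_right (log_card_le_sum_binEntropy h𝒜) (Real.log_nonneg one_le_two)

end Subadditivity

section Coupling

variable {V W ι κ τ : Type*} [Fintype V] [Fintype W] [Fintype ι] [Fintype κ]

/-- `a` is a coupling of the uniform probability measure on `V` with the weights `m` on `ι`. This is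
the combinatorial trace of an overlay of `V`, realised as equal intervals in `[0,1]`, with a
partition indexed by `ι`. -/
structure IsUniformCoupling (m : ι → ℝ) (a : V → ι → ℝ) : Prop where
  nonneg : ∀ u i, 0 ≤ a u i
  sum_right : ∀ u, ∑ i, a u i = (Fintype.card V : ℝ)⁻¹
  sum_left : ∀ i, ∑ u, a u i = m i

/-- The total error made when the function `p` on `V`, transported to `ι` by the coupling `a`, is
replaced by the function `w`. -/
def transportError (m : ι → ℝ) (a : V → ι → ℝ) (p : V → ℝ) (w : ι → ℝ) : ℝ :=
  ∑ i, |∑ u, a u i * p u - m i * w i|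

namespace IsUniformCoupling

variable {m : ι → ℝ} {a : V → ι → ℝ}

lemma weight_nonneg (ha : IsUniformCoupling m a) (i : ι) : 0 ≤ m i :=
  ha.sum_left i ▸ Finset.sum_nonneg fun u _ => ha.nonneg u i

lemma sum_sum [Nonempty V] (ha : IsUniformCoupling m a) : ∑ u, ∑ i, a u i = 1 := by
  simp only [ha.sum_right, Finset.sum_const, Finset.card_univ, nsmul_eq_mul]
  exact mul_inv_cancel₀ (mod_cast Fintype.card_ne_zero)

lemma sum_weight [Nonempty V] (ha : IsUniformCoupling m a) : ∑ i, m i = 1 := by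
  simp only [← ha.sum_left]
  rw [Finset.sum_comm, ha.sum_sum]

lemma card_mul_mem_Icc [Nonempty V] (ha : IsUniformCoupling m a) (u : V) (i : ι) :
    Fintype.card V * a u i ∈ Icc (0 : ℝ) 1 := by
  refine ⟨mul_nonneg (Nat.cast_nonneg _) (ha.nonneg u i), ?_⟩
  calc Fintype.card V * a u i ≤ Fintype.card V * ∑ j, a u j := by
        gcongr
        exact Finset.single_le_sum (fun j _ => ha.nonneg u j) (Finset.mem_univ i)
    _ = 1 := by rw [ha.sum_right, mul_inv_cancel₀ (mod_cast Fintype.card_ne_zero)]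

lemma prod {m' : κ → ℝ} {a' : W → κ → ℝ} (ha : IsUniformCoupling m a)
    (ha' : IsUniformCoupling m' a') :
    IsUniformCoupling (fun b : ι × κ => m b.1 * m' b.2)
      (fun (e : V × W) b => a e.1 b.1 * a' e.2 b.2) where
  nonneg e b := mul_nonneg (ha.nonneg _ _) (ha'.nonneg _ _)
  sum_right e := by
    rw [Fintype.sum_prod_type, ← Finset.sum_mul_sum, ha.sum_right, ha'.sum_right,
      Fintype.card_prod, Nat.cast_mul, mul_inv]
  sum_left b := by
    simp only [Fintype.sum_prod_type, ← Finset.sum_mul_sum, ha.sum_left, ha'.sum_left]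

lemma transported_mem_Icc (ha : IsUniformCoupling m a) {p : V → ℝ} (hp : ∀ u, p u ∈ Icc (0 : ℝ) 1)
    (i : ι) : ∑ u, a u i * p u ∈ Icc 0 (m i) := by
  refine ⟨Finset.sum_nonneg fun u _ => mul_nonneg (ha.nonneg u i) (hp u).1, ?_⟩
  rw [← ha.sum_left i]
  exact Finset.sum_le_sum fun u _ => mul_le_of_le_one_right (ha.nonneg u i) (hp u).2

-- Concavity of the entropy within each block; a block of weight `0` contributes `0` on both sides.
lemma sum_mul_binEnt_le (ha : IsUniformCoupling m a) {p : V → ℝ} {y : ℝ}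
    (hp : ∀ u, p u ∈ Icc (0 : ℝ) 1) (hy : y ∈ Icc (0 : ℝ) 1) (i : ι) :
    ∑ u, a u i * binEnt (p u) ≤
      m i * binEnt y + m i * htilde |(∑ u, a u i * p u) / m i - y| := by
  have hq : (∑ u, a u i * p u) / m i ∈ Icc (0 : ℝ) 1 :=
    ⟨div_nonneg (ha.transported_mem_Icc hp i).1 (ha.weight_nonneg i),
      div_le_one_of_le₀ (ha.transported_mem_Icc hp i).2 (ha.weight_nonneg i)⟩
  have hjensen := sum_mul_le_of_concaveOn concaveOn_binEnt (t := Finset.univ)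
    (fun u _ => ha.nonneg u i) (fun u _ => hp u)
  rw [ha.sum_left] at hjensen
  rw [← mul_add]
  exact hjensen.trans
    (mul_le_mul_of_nonneg_left (binEnt_le_binEnt_add_htilde hq hy) (ha.weight_nonneg i))

lemma weight_mul_abs_div_sub (ha : IsUniformCoupling m a) {p : V → ℝ}
    (hp : ∀ u, p u ∈ Icc (0 : ℝ) 1) (y : ℝ) (i : ι) :
    m i * |(∑ u, a u i * p u) / m i - y| = |∑ u, a u i * p u - m i * y| := by
  have hmul : m i * ((∑ u, a u i * p u) / m i) = ∑ u, a u i * p u :=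
    mul_div_cancel_of_imp' fun hzero => by
      have h := ha.transported_mem_Icc hp i
      rw [hzero, Icc_self] at h
      exact h
  rw [← abs_of_nonneg (ha.weight_nonneg i), ← abs_mul, abs_of_nonneg (ha.weight_nonneg i), mul_sub,
    hmul]

lemma mean_binEnt_le [Nonempty V] (ha : IsUniformCoupling m a) {p : V → ℝ} {w : ι → ℝ}
    (hp : ∀ u, p u ∈ Icc (0 : ℝ) 1) (hw : ∀ i, w i ∈ Icc (0 : ℝ) 1) :
    (Fintype.card V : ℝ)⁻¹ * ∑ u, binEnt (p u) ≤
      ∑ i, m i * binEnt (w i) + htilde (transportError m a p w) := by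
  have hhtilde := sum_mul_le_of_concaveOn concaveOn_htilde (t := Finset.univ)
    (fun i _ => ha.weight_nonneg i)
    (fun i _ => mem_Ici.2 (abs_nonneg ((∑ u, a u i * p u) / m i - w i)))
  rw [ha.sum_weight, one_mul, div_one] at hhtilde
  calc (Fintype.card V : ℝ)⁻¹ * ∑ u, binEnt (p u) = ∑ i, ∑ u, a u i * binEnt (p u) := by
        rw [Finset.sum_comm, Finset.mul_sum]
        exact Finset.sum_congr rfl fun u _ => by rw [← Finset.sum_mul, ha.sum_right]
    _ ≤ ∑ i, (m i * binEnt (w i) + m i * htilde |(∑ u, a u i * p u) / m i - w i|) :=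
        Finset.sum_le_sum fun i _ => ha.sum_mul_binEnt_le hp (hw i) i
    _ ≤ ∑ i, m i * binEnt (w i) + htilde (∑ i, m i * |(∑ u, a u i * p u) / m i - w i|) := by
        rw [Finset.sum_add_distrib]
        exact add_le_add_right hhtilde _
    _ = _ := by simp only [ha.weight_mul_abs_div_sub hp, transportError]

end IsUniformCoupling

lemma transportError_nonneg (m : ι → ℝ) (a : V → ι → ℝ) (p : V → ℝ) (w : ι → ℝ) :
    0 ≤ transportError m a p w :=
  Finset.sum_nonneg fun _ _ => abs_nonneg _

lemma transportError_expect_le {T : Finset τ} (hT : T.Nonempty) {m : ι → ℝ} {a : V → ι → ℝ}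
    {p : τ → V → ℝ} {w : ι → ℝ} {ε : ℝ} (h : ∀ t ∈ T, transportError m a (p t) w ≤ ε) :
    transportError m a (fun u => 𝔼 t ∈ T, p t u) w ≤ ε := by
  calc transportError m a (fun u => 𝔼 t ∈ T, p t u) w
      = ∑ i, |𝔼 t ∈ T, (∑ u, a u i * p t u - m i * w i)| := by
        refine Finset.sum_congr rfl fun i _ => ?_
        rw [Finset.expect_sub_distrib, Finset.expect_const hT, Finset.expect_sum_comm]
        simp only [Finset.mul_expect]
    _ ≤ ∑ i, 𝔼 t ∈ T, |∑ u, a u i * p t u - m i * w i| :=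
        Finset.sum_le_sum fun i _ => Finset.abs_expect_le _ _
    _ = 𝔼 t ∈ T, transportError m a (p t) w := (Finset.expect_sum_comm _ _ _).symm
    _ ≤ ε := Finset.expect_le hT h

lemma transportError_le_add_sum_abs_sub {m : ι → ℝ} {p : V → ℝ} (hp : ∀ u, |p u| ≤ 1)
    (a a' : V → ι → ℝ) (w : ι → ℝ) :
    transportError m a p w ≤ transportError m a' p w + ∑ u, ∑ i, |a u i - a' u i| := by
  rw [Finset.sum_comm, transportError, transportError, ← Finset.sum_add_distrib]
  refine Finset.sum_le_sum fun i _ => ?_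
  calc |∑ u, a u i * p u - m i * w i|
      = |(∑ u, a' u i * p u - m i * w i) + ∑ u, (a u i - a' u i) * p u| := by
        simp only [sub_mul, Finset.sum_sub_distrib]
        ring_nf
    _ ≤ |∑ u, a' u i * p u - m i * w i| + ∑ u, |a u i - a' u i| := by
        refine (abs_add_le _ _).trans
          (add_le_add_right ((Finset.abs_sum_le_sum_abs _ _).trans ?_) _)
        exact Finset.sum_le_sum fun u _ => by
          rw [abs_mul]
          exact mul_le_of_le_one_right (abs_nonneg _) (hp u)

lemma IsUniformCoupling.sum_abs_prod_sub_le [Nonempty V] {m m' : ι → ℝ} {a a' : V → ι → ℝ}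
    (ha : IsUniformCoupling m a) (ha' : IsUniformCoupling m' a') :
    ∑ e : V × V, ∑ b : ι × ι, |a e.1 b.1 * a e.2 b.2 - a' e.1 b.1 * a' e.2 b.2| ≤
      2 * ∑ u, ∑ i, |a u i - a' u i| := by
  have hterm : ∀ u v i j, |a u i * a v j - a' u i * a' v j| ≤
      |a u i - a' u i| * a v j + a' u i * |a v j - a' v j| := fun u v i j => by
    calc |a u i * a v j - a' u i * a' v j|
        = |(a u i - a' u i) * a v j + a' u i * (a v j - a' v j)| := by ring_nf
      _ ≤ _ := abs_add_le _ _
      _ = _ := by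
        rw [abs_mul, abs_mul, abs_of_nonneg (ha.nonneg v j), abs_of_nonneg (ha'.nonneg u i)]
  calc ∑ e : V × V, ∑ b : ι × ι, |a e.1 b.1 * a e.2 b.2 - a' e.1 b.1 * a' e.2 b.2|
      ≤ ∑ e : V × V, ∑ b : ι × ι,
          (|a e.1 b.1 - a' e.1 b.1| * a e.2 b.2 + a' e.1 b.1 * |a e.2 b.2 - a' e.2 b.2|) :=
        Finset.sum_le_sum fun _ _ => Finset.sum_le_sum fun _ _ => hterm _ _ _ _
    _ = (∑ u, ∑ i, |a u i - a' u i|) * (∑ u, ∑ i, a u i) +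
          (∑ u, ∑ i, a' u i) * ∑ u, ∑ i, |a u i - a' u i| := by
        simp only [Finset.sum_add_distrib, Fintype.sum_prod_type, ← Finset.sum_mul_sum]
    _ = 2 * ∑ u, ∑ i, |a u i - a' u i| := by
        rw [ha.sum_sum, ha'.sum_sum]
        ring

end Coupling

section GraphCounting

variable {V ι τ κ : Type*}

open Classical in
/-- The indicator function of adjacency in `G`, on ordered pairs of vertices. -/
def adjIndicator (G : SimpleGraph V) (e : V × V) : ℝ := if G.Adj e.1 e.2 then 1 else 0

/-- The proportion of the graphs in `T` in which the pair `e` is adjacent. -/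
def edgeFreq (T : Finset (SimpleGraph V)) (e : V × V) : ℝ := 𝔼 G ∈ T, adjIndicator G e

lemma adjIndicator_mem_Icc (G : SimpleGraph V) (e : V × V) :
    adjIndicator G e ∈ Icc (0 : ℝ) 1 := by
  unfold adjIndicator
  split <;> simp

lemma edgeFreq_mem_Icc {T : Finset (SimpleGraph V)} (hT : T.Nonempty) (e : V × V) :
    edgeFreq T e ∈ Icc (0 : ℝ) 1 :=
  ⟨Finset.le_expect hT fun G _ => (adjIndicator_mem_Icc G e).1,
    Finset.expect_le hT fun G _ => (adjIndicator_mem_Icc G e).2⟩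

lemma sum_prod_eq_two_mul_sum_sym2 [Fintype V] {f : Sym2 V → ℝ}
    (hf : ∀ v, f s(v, v) = 0) : ∑ e : V × V, f s(e.1, e.2) = 2 * ∑ z, f z := by
  classical
  rw [← Finset.sum_fiberwise' Finset.univ (fun e : V × V => s(e.1, e.2)) f, Finset.mul_sum]
  refine Finset.sum_congr rfl fun z _ => ?_
  induction z with | _ u v =>
  rcases eq_or_ne u v with rfl | huv
  · rw [hf, Finset.sum_const_zero, mul_zero]
  · have hfiber : ({e : V × V | s(e.1, e.2) = s(u, v)} : Finset (V × V)) = {(u, v), (v, u)} := by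
      ext e
      simp [Prod.ext_iff]
    rw [hfiber, Finset.sum_pair (by simp [huv]), two_mul]

lemma memberFreq_image_edgeFinset [DecidableEq V] [DecidableEq (Finset (Sym2 V))]
    [∀ G : SimpleGraph V, Fintype G.edgeSet] (T : Finset (SimpleGraph V)) (u v : V) :
    memberFreq (T.image fun G => G.edgeFinset) s(u, v) = edgeFreq T (u, v) := by
  have hinj : Function.Injective fun G : SimpleGraph V => G.edgeFinset :=
    fun _ _ => SimpleGraph.edgeFinset_inj.1
  simp only [memberFreq, edgeFreq, adjIndicator, Finset.filter_image,
    Finset.card_image_of_injective _ hinj, Finset.expect_eq_sum_div_card, Finset.sum_boole]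
  congr!
  rw [SimpleGraph.mem_edgeFinset, SimpleGraph.mem_edgeSet]

variable [Fintype V]

lemma logb_card_le_sum_edgeFreq {T : Finset (SimpleGraph V)} (hT : T.Nonempty) :
    Real.logb 2 #T ≤ 2⁻¹ * ∑ e, binEnt (edgeFreq T e) := by
  classical
  set 𝒜 := T.image fun G => G.edgeFinset with h𝒜
  have hdiag : ∀ v, binEnt (memberFreq 𝒜 s(v, v)) = 0 := fun v => by
    simp only [h𝒜, memberFreq_image_edgeFinset, edgeFreq, adjIndicator, SimpleGraph.irrefl,
      if_false, Finset.expect_const_zero, binEnt_zero]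
  calc Real.logb 2 #T = Real.logb 2 #𝒜 := by
        rw [Finset.card_image_of_injective _ fun _ _ => SimpleGraph.edgeFinset_inj.1]
    _ ≤ ∑ z, binEnt (memberFreq 𝒜 z) := logb_card_le_sum_binEnt (hT.image _)
    _ = 2⁻¹ * ∑ e : V × V, binEnt (memberFreq 𝒜 s(e.1, e.2)) := by
        rw [sum_prod_eq_two_mul_sum_sym2 (f := fun z => binEnt (memberFreq 𝒜 z)) hdiag,
          inv_mul_cancel_left₀ two_ne_zero]
    _ = 2⁻¹ * ∑ e, binEnt (edgeFreq T e) := by simp only [h𝒜, memberFreq_image_edgeFinset]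

variable [Fintype ι]

/-- The total error made when the edge densities of `G` between the parts of the fractional vertex
partition described by the coupling `a`, with part sizes `m`, are replaced by `w`. -/
def blockError (m : ι → ℝ) (a : V → ι → ℝ) (G : SimpleGraph V) (w : ι × ι → ℝ) : ℝ :=
  transportError (fun b : ι × ι => m b.1 * m b.2)
    (fun (e : V × V) b => a e.1 b.1 * a e.2 b.2) (adjIndicator G) w

lemma logb_card_le_of_blockError_le [Nonempty V] {T : Finset (SimpleGraph V)} (hT : T.Nonempty)
    {m : ι → ℝ} {a : V → ι → ℝ} (ha : IsUniformCoupling m a) {w : ι × ι → ℝ}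
    (hw : ∀ b, w b ∈ Icc (0 : ℝ) 1) {ε : ℝ} (hT' : ∀ G ∈ T, blockError m a G w ≤ ε) :
    Real.logb 2 #T ≤ (Fintype.card V : ℝ) ^ 2 / 2 *
      (∑ b : ι × ι, m b.1 * m b.2 * binEnt (w b) + htilde ε) := by
  have hcard : (Fintype.card (V × V) : ℝ) = (Fintype.card V : ℝ) ^ 2 := by
    rw [Fintype.card_prod, Nat.cast_mul, sq]
  have hpos : (0 : ℝ) < (Fintype.card V : ℝ) ^ 2 := by
    have : (0 : ℝ) < Fintype.card V := mod_cast Fintype.card_pos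
    positivity
  have herr := transportError_expect_le hT hT'
  have hmean := (ha.prod ha).mean_binEnt_le (edgeFreq_mem_Icc hT) hw
  rw [hcard, inv_mul_le_iff₀ hpos] at hmean
  have hmono := htilde_le_htilde (transportError_nonneg _ _ _ _) herr
  calc Real.logb 2 #T ≤ 2⁻¹ * ∑ e, binEnt (edgeFreq T e) := logb_card_le_sum_edgeFreq hT
    _ ≤ 2⁻¹ * ((Fintype.card V : ℝ) ^ 2 *
          (∑ b : ι × ι, m b.1 * m b.2 * binEnt (w b) + htilde ε)) := by
        gcongr
        exact hmean.trans (by gcongr; exact hmono)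
    _ = _ := by ring

lemma exists_coloring_unitInterval {M : ℕ} (hM : 0 < M) :
    ∃ c : ℝ → Fin (M + 1), ∀ x ∈ Icc (0 : ℝ) 1, ∀ y ∈ Icc (0 : ℝ) 1, c x = c y →
      |x - y| ≤ (M : ℝ)⁻¹ := by
  have hM' : (0 : ℝ) < M := mod_cast hM
  have hlt : ∀ x ∈ Icc (0 : ℝ) 1, ⌊M * x⌋₊ < M + 1 := fun x hx =>
    Nat.lt_succ_of_le (Nat.floor_le_of_le (mul_le_of_le_one_right hM'.le hx.2))
  refine ⟨fun x => Fin.ofNat (M + 1) ⌊M * x⌋₊, fun x hx y hy hxy => ?_⟩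
  have hfloor : ⌊M * x⌋₊ = ⌊M * y⌋₊ := by
    simpa only [Fin.ext_iff, Fin.ofNat, Nat.mod_eq_of_lt (hlt x hx),
      Nat.mod_eq_of_lt (hlt y hy)] using hxy
  have hx' : 0 ≤ M * x := mul_nonneg hM'.le hx.1
  have hy' : 0 ≤ M * y := mul_nonneg hM'.le hy.1
  have hscaled : |M * x - M * y| ≤ 1 := (Int.abs_sub_lt_one_of_floor_eq_floor (by
    rw [← Int.natCast_floor_eq_floor hx', ← Int.natCast_floor_eq_floor hy', hfloor])).le
  rwa [← mul_sub, abs_mul, abs_of_pos hM', ← le_div_iff₀' hM', one_div] at hscaled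

lemma logb_card_le_of_forall_fiber [Fintype κ] (f : τ → κ) {T : Finset τ} (hT : T.Nonempty) {B : ℝ}
    (hB : ∀ F ⊆ T, F.Nonempty → (∀ x ∈ F, ∀ y ∈ F, f x = f y) → Real.logb 2 #F ≤ B) :
    Real.logb 2 #T ≤ Real.logb 2 (Fintype.card κ) + B := by
  classical
  obtain ⟨x, hx⟩ := hT
  have : Nonempty κ := ⟨f x⟩
  have hκ : (0 : ℝ) < Fintype.card κ := mod_cast Fintype.card_pos
  have hTcard : (0 : ℝ) < #T := mod_cast Finset.card_pos.2 ⟨x, hx⟩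
  obtain ⟨y, -, hy⟩ := Finset.exists_le_card_fiber_of_nsmul_le_card_of_maps_to
    (b := (#T : ℝ) / Fintype.card κ) (fun x _ => Finset.mem_univ (f x)) Finset.univ_nonempty
    (by rw [Finset.card_univ, nsmul_eq_mul, mul_div_cancel₀ _ hκ.ne'])
  have hpos : (0 : ℝ) < #{x ∈ T | f x = y} := (div_pos hTcard hκ).trans_le hy
  calc Real.logb 2 #T ≤ Real.logb 2 (Fintype.card κ * #{x ∈ T | f x = y}) :=
        Real.logb_le_logb_of_le one_lt_two hTcard ((div_le_iff₀' hκ).1 hy)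
    _ = Real.logb 2 (Fintype.card κ) + Real.logb 2 #{x ∈ T | f x = y} :=
        Real.logb_mul hκ.ne' hpos.ne'
    _ ≤ _ := by
        gcongr
        refine hB _ (Finset.filter_subset _ _) (Finset.card_pos.1 (mod_cast hpos)) ?_
        intro x hx x' hx'
        rw [(Finset.mem_filter.1 hx).2, (Finset.mem_filter.1 hx').2]

lemma blockError_le_add [Nonempty V] {m : ι → ℝ} {a a' : V → ι → ℝ} (ha : IsUniformCoupling m a)
    (ha' : IsUniformCoupling m a') {η : ℝ}
    (h : ∀ u i, |Fintype.card V * a u i - Fintype.card V * a' u i| ≤ η) (G : SimpleGraph V)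
    (w : ι × ι → ℝ) :
    blockError m a G w ≤ blockError m a' G w + 2 * (Fintype.card ι * η) := by
  have hV : (0 : ℝ) < Fintype.card V := mod_cast Fintype.card_pos
  have hdist : ∑ u, ∑ i, |a u i - a' u i| ≤ Fintype.card ι * η := by
    calc ∑ u, ∑ i, |a u i - a' u i| ≤ ∑ _u : V, ∑ _i : ι, η / Fintype.card V :=
          Finset.sum_le_sum fun u _ => Finset.sum_le_sum fun i _ => by
            have := h u i
            rwa [← mul_sub, abs_mul, abs_of_pos hV, ← le_div_iff₀' hV] at this
      _ = Fintype.card ι * η := by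
          simp only [Finset.sum_const, Finset.card_univ, nsmul_eq_mul]
          field_simp
  calc blockError m a G w ≤ blockError m a' G w + ∑ e : V × V, ∑ b : ι × ι,
          |a e.1 b.1 * a e.2 b.2 - a' e.1 b.1 * a' e.2 b.2| :=
        transportError_le_add_sum_abs_sub (fun e => abs_le.2
          ⟨by linarith [(adjIndicator_mem_Icc G e).1], (adjIndicator_mem_Icc G e).2⟩) _ _ _
    _ ≤ blockError m a' G w + 2 * (Fintype.card ι * η) := by
        gcongr
        exact (ha.sum_abs_prod_sub_le ha').trans (by gcongr)

-- Rounding the couplings to multiples of `(M |V|)⁻¹` leaves few classes of graphs, and all graphs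
-- in one class can share a coupling.
lemma logb_card_le_of_forall_exists_coupling [Nonempty V] {T : Finset (SimpleGraph V)}
    (hT : T.Nonempty) {m : ι → ℝ} {w : ι × ι → ℝ} (hw : ∀ b, w b ∈ Icc (0 : ℝ) 1) {ε : ℝ}
    (h : ∀ G ∈ T, ∃ a, IsUniformCoupling m a ∧ blockError m a G w ≤ ε) {M : ℕ} (hM : 0 < M) :
    Real.logb 2 #T ≤ Fintype.card V * (Fintype.card ι * Real.logb 2 (M + 1)) +
      (Fintype.card V : ℝ) ^ 2 / 2 * (∑ b : ι × ι, m b.1 * m b.2 * binEnt (w b) +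
        htilde (ε + 2 * (Fintype.card ι * (M : ℝ)⁻¹))) := by
  classical
  choose! a ha herr using h
  obtain ⟨c, hc⟩ := exists_coloring_unitInterval hM
  have hclasses : Real.logb 2 (Fintype.card (V × ι → Fin (M + 1))) =
      Fintype.card V * (Fintype.card ι * Real.logb 2 (M + 1)) := by
    rw [Fintype.card_fun, Fintype.card_fin, Nat.cast_pow, Real.logb_pow, Fintype.card_prod]
    push_cast
    ring
  rw [← hclasses]
  refine logb_card_le_of_forall_fiber
    (fun G (x : V × ι) => c (Fintype.card V * a G x.1 x.2)) hT fun F hFT hF hsame => ?_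
  obtain ⟨G₀, hG₀⟩ := hF
  refine logb_card_le_of_blockError_le ⟨G₀, hG₀⟩ (ha G₀ (hFT hG₀)) hw fun G hG => ?_
  refine (blockError_le_add (ha G₀ (hFT hG₀)) (ha G (hFT hG)) (fun u i => ?_) G w).trans
    (add_le_add_left (herr G (hFT hG)) _)
  exact hc _ ((ha G₀ (hFT hG₀)).card_mul_mem_Icc u i) _ ((ha G (hFT hG)).card_mul_mem_Icc u i)
    (congrFun (hsame G₀ hG₀ G hG) (u, i))

end GraphCounting

section AEPartition

variable {α β ι κ : Type*} [MeasurableSpace α] [MeasurableSpace β]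

/-- The measurable sets `P i` partition the space up to a `μ`-null set. Null sets are ignored
because the cells of a graph on `{1, …, n}` miss the point `0` of `[0,1]`. -/
structure IsAEPartition (μ : Measure α) (P : ι → Set α) : Prop where
  measurableSet : ∀ i, MeasurableSet (P i)
  pairwise_disjoint : Pairwise (Function.onFun Disjoint P)
  ae_exists_mem : ∀ᵐ x ∂μ, ∃ i, x ∈ P i

namespace IsAEPartition

variable {μ : Measure α} {ν : Measure β} {P : ι → Set α} {Q : κ → Set β}

lemma eq_of_mem (hP : IsAEPartition μ P) {x : α} {i j : ι} (hi : x ∈ P i) (hj : x ∈ P j) : i = j :=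
  hP.pairwise_disjoint.eq (not_disjoint_iff.2 ⟨x, hi, hj⟩)

lemma restrict (hP : IsAEPartition μ P) (s : Set α) : IsAEPartition (μ.restrict s) P :=
  ⟨hP.measurableSet, hP.pairwise_disjoint, ae_restrict_of_ae hP.ae_exists_mem⟩

lemma preimage (hP : IsAEPartition μ P) {σ : β → α} (hσ : MeasurePreserving σ ν μ) :
    IsAEPartition ν fun i => σ ⁻¹' P i where
  measurableSet i := hσ.measurable (hP.measurableSet i)
  pairwise_disjoint _ _ hij := (hP.pairwise_disjoint hij).preimage σ
  ae_exists_mem := hσ.quasiMeasurePreserving.ae hP.ae_exists_mem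

lemma prod [SFinite μ] [SFinite ν] (hP : IsAEPartition μ P) (hQ : IsAEPartition ν Q) :
    IsAEPartition (μ.prod ν) fun b : ι × κ => P b.1 ×ˢ Q b.2 where
  measurableSet b := (hP.measurableSet b.1).prod (hQ.measurableSet b.2)
  pairwise_disjoint b b' hne := by
    refine disjoint_left.2 fun p hp hp' => hne ?_
    exact Prod.ext (hP.eq_of_mem hp.1 hp'.1) (hQ.eq_of_mem hp.2 hp'.2)
  ae_exists_mem := by
    filter_upwards [Measure.quasiMeasurePreserving_fst.ae hP.ae_exists_mem,
      Measure.quasiMeasurePreserving_snd.ae hQ.ae_exists_mem] with p ⟨i, hi⟩ ⟨j, hj⟩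
    exact ⟨(i, j), hi, hj⟩

variable [Fintype ι] [IsFiniteMeasure μ]

lemma integral_eq_sum (hP : IsAEPartition μ P) {f : α → ℝ} {c : ι → ℝ}
    (hf : ∀ i, ∀ x ∈ P i, f x = c i) : ∫ x, f x ∂μ = ∑ i, μ.real (P i) * c i := by
  have hconst : ∀ i, EqOn f (fun _ => c i) (P i) := hf
  have hint : ∀ i, IntegrableOn f (P i) μ := fun i =>
    (integrableOn_congr_fun (hconst i) (hP.measurableSet i)).2 (integrable_const _)
  calc ∫ x, f x ∂μ = ∫ x in ⋃ i, P i, f x ∂μ := by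
        rw [Measure.restrict_eq_self_of_ae_mem (by simpa only [mem_iUnion] using hP.ae_exists_mem)]
    _ = ∑ i, ∫ x in P i, f x ∂μ :=
        integral_iUnion_fintype hP.measurableSet hP.pairwise_disjoint hint
    _ = ∑ i, μ.real (P i) * c i := Finset.sum_congr rfl fun i _ => by
        rw [setIntegral_congr_fun (hP.measurableSet i) (hconst i), setIntegral_const, smul_eq_mul]

lemma sum_measureReal_inter (hP : IsAEPartition μ P) (s : Set α) :
    ∑ i, μ.real (s ∩ P i) = μ.real s := by
  have h := (hP.restrict s).integral_eq_sum (f := fun _ => 1) (c := fun _ => 1) fun _ _ _ => rfl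
  simp only [mul_one, setIntegral_const, smul_eq_mul,
    measureReal_restrict_apply (hP.measurableSet _), inter_comm _ s] at h
  exact h.symm

end IsAEPartition

variable {μ : Measure α} {V : Type*} [Fintype V] {A : V → Set α} {B : ι → Set α}

lemma IsAEPartition.isUniformCoupling [IsFiniteMeasure μ] [Fintype ι] (hA : IsAEPartition μ A)
    (hB : IsAEPartition μ B) (hcard : ∀ u, μ.real (A u) = (Fintype.card V : ℝ)⁻¹) :
    IsUniformCoupling (fun i => μ.real (B i)) (fun u i => μ.real (A u ∩ B i)) where
  nonneg _ _ := measureReal_nonneg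
  sum_right u := by rw [hB.sum_measureReal_inter, hcard]
  sum_left i := by
    simp only [inter_comm _ (B i)]
    exact hA.sum_measureReal_inter (B i)

lemma IsAEPartition.setIntegral_prod_eq_sum [IsFiniteMeasure μ] (hA : IsAEPartition μ A)
    {f : α × α → ℝ} {c : V × V → ℝ} (hf : ∀ e, ∀ p ∈ A e.1 ×ˢ A e.2, f p = c e) (S T : Set α) :
    ∫ p in S ×ˢ T, f p ∂μ.prod μ = ∑ e, μ.real (A e.1 ∩ S) * μ.real (A e.2 ∩ T) * c e := by
  rw [((hA.prod hA).restrict _).integral_eq_sum hf]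
  refine Finset.sum_congr rfl fun e _ => ?_
  rw [measureReal_restrict_apply ((hA.prod hA).measurableSet e), prod_inter_prod,
    measureReal_prod_prod]

end AEPartition

section CutNorm

/-- Lebesgue measure on the unit interval, as a measure on `ℝ`. -/
def unitMeasure : Measure ℝ := volume.restrict (Icc 0 1)

instance instIsProbabilityMeasureUnitMeasure : IsProbabilityMeasure unitMeasure :=
  ⟨by simp [unitMeasure]⟩

lemma restrict_unitMeasure_prod {S T : Set ℝ} (hS : MeasurableSet S) (hT : MeasurableSet T) :
    (unitMeasure.prod unitMeasure).restrict (S ×ˢ T) =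
      volume.restrict ((S ∩ Icc 0 1) ×ˢ (T ∩ Icc 0 1)) := by
  rw [← Measure.prod_restrict, Measure.volume_eq_prod, ← Measure.prod_restrict, unitMeasure,
    Measure.restrict_restrict hS, Measure.restrict_restrict hT]

lemma abs_setIntegral_le_cutNorm {U : ℝ → ℝ → ℝ} {C : ℝ} (hU : ∀ x y, |U x y| ≤ C) {S T : Set ℝ}
    (hS : MeasurableSet S) (hT : MeasurableSet T) :
    |∫ p in S ×ˢ T, U p.1 p.2 ∂unitMeasure.prod unitMeasure| ≤ cutNorm U := by
  have hbdd : ∀ S T : Set ℝ, MeasurableSet S → MeasurableSet T → S ⊆ Icc 0 1 → T ⊆ Icc 0 1 →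
      |∫ p in S ×ˢ T, U p.1 p.2| ≤ C := fun S T hS hT hS1 hT1 => by
    have hC : 0 ≤ C := (abs_nonneg _).trans (hU 0 0)
    rw [← inter_eq_left.2 hS1, ← inter_eq_left.2 hT1, ← restrict_unitMeasure_prod hS hT]
    have hnorm : ∀ p ∈ S ×ˢ T, ‖U p.1 p.2‖ ≤ C := fun p _ => hU p.1 p.2
    refine (norm_setIntegral_le_of_norm_le_const (measure_lt_top _ _) hnorm).trans ?_
    exact mul_le_of_le_one_right hC measureReal_le_one
  rw [restrict_unitMeasure_prod hS hT]
  refine le_csSup ⟨C, ?_⟩ ⟨S ∩ Icc 0 1, T ∩ Icc 0 1, hS.inter measurableSet_Icc,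
    hT.inter measurableSet_Icc, inter_subset_right, inter_subset_right, rfl⟩
  rintro r ⟨S, T, hS, hT, hS1, hT1, rfl⟩
  exact hbdd S T hS hT hS1 hT1

lemma exists_cutNorm_lt_of_deltaCut_lt {W₁ W₂ : ℝ → ℝ → ℝ} {η : ℝ} (h : deltaCut W₁ W₂ < η) :
    ∃ σ₁ σ₂, MeasurePreserving σ₁ unitMeasure unitMeasure ∧
      MeasurePreserving σ₂ unitMeasure unitMeasure ∧
      cutNorm (fun x y => W₁ (σ₁ x) (σ₁ y) - W₂ (σ₂ x) (σ₂ y)) < η := by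
  have hid : IsMPSelf id := ⟨MeasurePreserving.id _, mapsTo_id _⟩
  obtain ⟨_, ⟨σ₁, σ₂, hσ₁, hσ₂, rfl⟩, hlt⟩ :=
    exists_lt_of_csInf_lt (by exact ⟨_, id, id, hid, hid, rfl⟩) h
  exact ⟨σ₁, σ₂, hσ₁.1, hσ₂.1, hlt⟩

end CutNorm

section VertexCells

variable {n : ℕ}

/-- The part of `[0,1]` representing the vertex `u` in the graphon of a graph on `{1, …, n}`. -/
def vertexCell (n : ℕ) (u : Fin n) : Set ℝ := {x | ⌈(n : ℝ) * x⌉ = (u : ℤ) + 1}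

lemma vertexCell_eq_Ioc (hn : 0 < n) (u : Fin n) :
    vertexCell n u = Ioc ((u : ℝ) / n) (((u : ℝ) + 1) / n) := by
  have hn' : (0 : ℝ) < n := mod_cast hn
  ext x
  rw [mem_Ioc, div_lt_iff₀' hn', le_div_iff₀' hn']
  change ⌈(n : ℝ) * x⌉ = (u : ℤ) + 1 ↔ _
  rw [Int.ceil_eq_iff]
  push_cast
  rw [add_sub_cancel_right]

lemma measurableSet_vertexCell (hn : 0 < n) (u : Fin n) : MeasurableSet (vertexCell n u) :=
  vertexCell_eq_Ioc hn u ▸ measurableSet_Ioc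

lemma unitMeasure_real_vertexCell (hn : 0 < n) (u : Fin n) :
    unitMeasure.real (vertexCell n u) = (n : ℝ)⁻¹ := by
  have hn' : (0 : ℝ) < n := mod_cast hn
  have hsub : vertexCell n u ⊆ Icc 0 1 := by
    rw [vertexCell_eq_Ioc hn]
    refine Ioc_subset_Icc_self.trans (Icc_subset_Icc (by positivity) ?_)
    rw [div_le_one hn']
    exact_mod_cast u.2
  rw [unitMeasure, measureReal_restrict_apply (measurableSet_vertexCell hn u),
    inter_eq_left.2 hsub, vertexCell_eq_Ioc hn, Real.volume_real_Ioc_of_le (by gcongr; linarith),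
    ← sub_div, add_sub_cancel_left, one_div]

lemma isAEPartition_vertexCell (hn : 0 < n) : IsAEPartition unitMeasure (vertexCell n) where
  measurableSet := measurableSet_vertexCell hn
  pairwise_disjoint u v huv := disjoint_left.2 fun x hu hv => huv <| Fin.ext <| by
    have h : (u : ℤ) + 1 = (v : ℤ) + 1 := hu.symm.trans hv
    omega
  ae_exists_mem := by
    have hn' : (0 : ℝ) < n := mod_cast hn
    rw [unitMeasure, restrict_Ioc_eq_restrict_Icc.symm]
    filter_upwards [ae_restrict_mem measurableSet_Ioc] with x hx
    have hpos : 0 < ⌈(n : ℝ) * x⌉ := Int.ceil_pos.2 (mul_pos hn' hx.1)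
    have hle : ⌈(n : ℝ) * x⌉ ≤ n := Int.ceil_le.2 (mul_le_of_le_one_right hn'.le hx.2)
    refine ⟨⟨(⌈(n : ℝ) * x⌉ - 1).toNat, by omega⟩, ?_⟩
    change ⌈(n : ℝ) * x⌉ = ((⌈(n : ℝ) * x⌉ - 1).toNat : ℤ) + 1
    omega

lemma graphonOfGraph_mem_Icc (G : SimpleGraph (Fin n)) (x y : ℝ) :
    graphonOfGraph G x y ∈ Icc (0 : ℝ) 1 := by
  unfold graphonOfGraph
  split_ifs <;> simp

lemma measurable_graphonOfGraph (G : SimpleGraph (Fin n)) :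
    Measurable (Function.uncurry (graphonOfGraph G)) := by
  classical
  let F : ℤ × ℤ → ℝ := fun z =>
    if ∃ i j : Fin n, G.Adj i j ∧ z.1 = (i : ℤ) + 1 ∧ z.2 = (j : ℤ) + 1 then 1 else 0
  have hceil : Measurable fun p : ℝ × ℝ => (⌈(n : ℝ) * p.1⌉, ⌈(n : ℝ) * p.2⌉) := by fun_prop
  convert (measurable_of_countable F).comp hceil using 1
  ext p
  simp only [F, Function.uncurry, graphonOfGraph, Function.comp_apply]

lemma graphonOfGraph_eq_adjIndicator (G : SimpleGraph (Fin n)) (e : Fin n × Fin n) (p : ℝ × ℝ)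
    (hp : p ∈ vertexCell n e.1 ×ˢ vertexCell n e.2) :
    graphonOfGraph G p.1 p.2 = adjIndicator G e := by
  have hcell : ∀ {x : ℝ} {u v : Fin n}, x ∈ vertexCell n u → ⌈(n : ℝ) * x⌉ = (v : ℤ) + 1 → v = u :=
    fun hu hv => Fin.ext (by have := hv.symm.trans hu; omega)
  classical
  unfold graphonOfGraph adjIndicator
  refine if_congr ⟨?_, fun hadj => ⟨e.1, e.2, hadj, hp.1, hp.2⟩⟩ rfl rfl
  rintro ⟨i, j, hadj, hi, hj⟩
  rwa [hcell hp.1 hi, hcell hp.2 hj] at hadj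

end VertexCells

section Overlay

variable {W : ℝ → ℝ → ℝ} {ι : Type*} {P : ι → Set ℝ}

lemma integrable_of_mem_Icc {α : Type*} [MeasurableSpace α] {μ : Measure α} [IsFiniteMeasure μ]
    {f : α → ℝ} (hf : Measurable f) (hf01 : ∀ x, f x ∈ Icc (0 : ℝ) 1) : Integrable f μ :=
  .of_bound hf.aestronglyMeasurable 1 (.of_forall fun x => by
    rw [Real.norm_of_nonneg (hf01 x).1]
    exact (hf01 x).2)

lemma setAverage_mem_Icc {α : Type*} [MeasurableSpace α] {μ : Measure α} [IsFiniteMeasure μ]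
    {f : α → ℝ} (hf01 : ∀ x, f x ∈ Icc (0 : ℝ) 1) (s : Set α) :
    ⨍ x in s, f x ∂μ ∈ Icc (0 : ℝ) 1 := by
  have hnorm : ∀ x ∈ s, ‖f x‖ ≤ 1 := fun x _ => by
    rw [Real.norm_of_nonneg (hf01 x).1]
    exact (hf01 x).2
  have hnonneg : 0 ≤ ∫ x in s, f x ∂μ := integral_nonneg fun x => (hf01 x).1
  have hle := norm_setIntegral_le_of_norm_le_const (measure_lt_top μ s) hnorm
  rw [Real.norm_of_nonneg hnonneg, one_mul] at hle
  rw [setAverage_eq, smul_eq_mul]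
  exact ⟨mul_nonneg (inv_nonneg.2 measureReal_nonneg) hnonneg,
    inv_mul_le_one_of_le₀ hle measureReal_nonneg⟩

lemma setIntegral_comp_prodMap {α β : Type*} [MeasurableSpace α] [MeasurableSpace β]
    {μ : Measure α} {ν : Measure β} [SFinite μ] [SFinite ν] {σ : α → β}
    (hσ : MeasurePreserving σ μ ν) {f : β × β → ℝ} (hf : Measurable f) {S T : Set β}
    (hS : MeasurableSet S) (hT : MeasurableSet T) :
    ∫ p in (σ ⁻¹' S) ×ˢ (σ ⁻¹' T), f (σ p.1, σ p.2) ∂μ.prod μ = ∫ p in S ×ˢ T, f p ∂ν.prod ν := by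
  have h := hσ.prod hσ
  rw [← h.map_eq, setIntegral_map (hS.prod hT) hf.aestronglyMeasurable h.aemeasurable]
  rfl

/-- The average of `W` over the block `P b.1 ×ˢ P b.2`, with respect to the Lebesgue measure on
`[0,1]²`. -/
def blockAverage (P : ι → Set ℝ) (W : ℝ → ℝ → ℝ) (b : ι × ι) : ℝ :=
  ⨍ p in P b.1 ×ˢ P b.2, W p.1 p.2 ∂unitMeasure.prod unitMeasure

lemma mul_blockAverage (P : ι → Set ℝ) (W : ℝ → ℝ → ℝ) (b : ι × ι) :
    unitMeasure.real (P b.1) * unitMeasure.real (P b.2) * blockAverage P W b =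
      ∫ p in P b.1 ×ˢ P b.2, W p.1 p.2 ∂unitMeasure.prod unitMeasure := by
  rw [← measureReal_prod_prod, blockAverage, ← smul_eq_mul,
    measure_smul_setAverage _ (measure_ne_top _ _)]

lemma abs_sum_sub_mul_blockAverage_le (hW : Measurable (Function.uncurry W))
    (hW01 : ∀ x y, W x y ∈ Icc (0 : ℝ) 1) (hP : ∀ i, MeasurableSet (P i)) {n : ℕ} (hn : 0 < n)
    (G : SimpleGraph (Fin n)) {σ₁ σ₂ : ℝ → ℝ} (hσ₁ : MeasurePreserving σ₁ unitMeasure unitMeasure)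
    (hσ₂ : MeasurePreserving σ₂ unitMeasure unitMeasure) (b : ι × ι) :
    |∑ e : Fin n × Fin n, unitMeasure.real (σ₁ ⁻¹' vertexCell n e.1 ∩ σ₂ ⁻¹' P b.1) *
        unitMeasure.real (σ₁ ⁻¹' vertexCell n e.2 ∩ σ₂ ⁻¹' P b.2) * adjIndicator G e -
        unitMeasure.real (P b.1) * unitMeasure.real (P b.2) * blockAverage P W b| ≤
      cutNorm fun x y => graphonOfGraph G (σ₁ x) (σ₁ y) - W (σ₂ x) (σ₂ y) := by
  have hgraph := ((isAEPartition_vertexCell hn).preimage hσ₁).setIntegral_prod_eq_sum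
    (f := fun p => graphonOfGraph G (σ₁ p.1) (σ₁ p.2))
    (fun e p hp => graphonOfGraph_eq_adjIndicator G e (σ₁ p.1, σ₁ p.2) hp)
    (σ₂ ⁻¹' P b.1) (σ₂ ⁻¹' P b.2)
  have hgraphon := setIntegral_comp_prodMap hσ₂ hW (hP b.1) (hP b.2)
  simp only [Function.uncurry] at hgraphon
  have hintG : Integrable (fun p : ℝ × ℝ => graphonOfGraph G (σ₁ p.1) (σ₁ p.2))
      (unitMeasure.prod unitMeasure) :=
    integrable_of_mem_Icc ((measurable_graphonOfGraph G).comp (hσ₁.prod hσ₁).measurable)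
      fun p => graphonOfGraph_mem_Icc G _ _
  have hintW : Integrable (fun p : ℝ × ℝ => W (σ₂ p.1) (σ₂ p.2))
      (unitMeasure.prod unitMeasure) :=
    integrable_of_mem_Icc (hW.comp (hσ₂.prod hσ₂).measurable) fun p => hW01 _ _
  rw [mul_blockAverage, ← hgraph, ← hgraphon,
    ← integral_sub hintG.integrableOn hintW.integrableOn]
  refine abs_setIntegral_le_cutNorm
    (U := fun x y => graphonOfGraph G (σ₁ x) (σ₁ y) - W (σ₂ x) (σ₂ y)) (C := 1) (fun x y => ?_)
    (hσ₂.measurable (hP b.1)) (hσ₂.measurable (hP b.2))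
  have hG01 := graphonOfGraph_mem_Icc G (σ₁ x) (σ₁ y)
  have hxy := hW01 (σ₂ x) (σ₂ y)
  exact abs_sub_le_iff.2 ⟨by linarith [hG01.2, hxy.1], by linarith [hG01.1, hxy.2]⟩

lemma exists_coupling_of_deltaCut_lt [Fintype ι] (hW : Measurable (Function.uncurry W))
    (hW01 : ∀ x y, W x y ∈ Icc (0 : ℝ) 1) (hP : IsAEPartition unitMeasure P) {n : ℕ} (hn : 0 < n)
    {G : SimpleGraph (Fin n)} {η : ℝ} (h : deltaCut (graphonOfGraph G) W < η) :
    ∃ a, IsUniformCoupling (fun i => unitMeasure.real (P i)) a ∧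
      blockError (fun i => unitMeasure.real (P i)) a G (blockAverage P W) ≤
        (Fintype.card ι : ℝ) ^ 2 * η := by
  obtain ⟨σ₁, σ₂, hσ₁, hσ₂, hcut⟩ := exists_cutNorm_lt_of_deltaCut_lt h
  have hcell : ∀ u, unitMeasure.real (σ₁ ⁻¹' vertexCell n u) = (Fintype.card (Fin n) : ℝ)⁻¹ :=
    fun u => by
      rw [hσ₁.measureReal_preimage (measurableSet_vertexCell hn u).nullMeasurableSet,
        unitMeasure_real_vertexCell hn, Fintype.card_fin]
  have hcoupling := ((isAEPartition_vertexCell hn).preimage hσ₁).isUniformCoupling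
    (hP.preimage hσ₂) hcell
  simp only [fun i => hσ₂.measureReal_preimage (hP.measurableSet i).nullMeasurableSet] at hcoupling
  refine ⟨_, hcoupling, ?_⟩
  refine (Finset.sum_le_card_nsmul _ _ η fun b _ => ?_).trans_eq ?_
  · exact (abs_sum_sub_mul_blockAverage_le hW hW01 hP.measurableSet hn G hσ₁ hσ₂ b).trans hcut.le
  rw [Finset.card_univ, Fintype.card_prod, nsmul_eq_mul, Nat.cast_mul, sq]

end Overlay

section Counting

variable {W : ℝ → ℝ → ℝ} {k : ℕ} {P : Fin k → Set ℝ}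

lemma isAEPartition_unitMeasure (hmeas : ∀ i, MeasurableSet (P i))
    (hdisj : Pairwise (Function.onFun Disjoint P)) (hcover : (⋃ i, P i) = Icc (0 : ℝ) 1) :
    IsAEPartition unitMeasure P where
  measurableSet := hmeas
  pairwise_disjoint := hdisj
  ae_exists_mem := (ae_restrict_mem measurableSet_Icc).mono fun _ hx =>
    mem_iUnion.1 (hcover.symm ▸ hx)

lemma condExpPart_eq_blockAverage (hP : IsAEPartition unitMeasure P)
    (hP01 : ∀ i, P i ⊆ Icc (0 : ℝ) 1) {i j : Fin k} {x y : ℝ} (hx : x ∈ P i) (hy : y ∈ P j) :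
    condExpPart P W x y = blockAverage P W (i, j) := by
  have hmem : ∀ i' j', x ∈ P i' ∧ y ∈ P j' ↔ i' = i ∧ j' = j := fun i' j' =>
    ⟨fun h => ⟨hP.eq_of_mem h.1 hx, hP.eq_of_mem h.2 hy⟩, by rintro ⟨rfl, rfl⟩; exact ⟨hx, hy⟩⟩
  rw [blockAverage, restrict_unitMeasure_prod (hP.measurableSet i) (hP.measurableSet j),
    inter_eq_left.2 (hP01 i), inter_eq_left.2 (hP01 j)]
  simp only [condExpPart, hmem, ite_and, Finset.sum_ite_irrel, Finset.sum_const_zero,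
    Finset.sum_ite_eq', Finset.mem_univ, if_true]

lemma graphonEnt_condExpPart (hP : IsAEPartition unitMeasure P)
    (hP01 : ∀ i, P i ⊆ Icc (0 : ℝ) 1) :
    graphonEnt (condExpPart P W) = ∑ b : Fin k × Fin k,
      unitMeasure.real (P b.1) * unitMeasure.real (P b.2) * binEnt (blockAverage P W b) := by
  have hinner : ∀ i, ∀ x ∈ P i, ∫ y, binEnt (condExpPart P W x y) ∂unitMeasure =
      ∑ j, unitMeasure.real (P j) * binEnt (blockAverage P W (i, j)) := fun i x hx =>
    hP.integral_eq_sum fun j y hy => by rw [condExpPart_eq_blockAverage hP hP01 hx hy]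
  refine (hP.integral_eq_sum hinner).trans ?_
  simp only [Fintype.sum_prod_type, Finset.mul_sum, mul_assoc]

open Classical in
lemma NCut_eq_card (n : ℕ) (δ : ℝ) (W : ℝ → ℝ → ℝ) :
    NCut n δ W = #{G : SimpleGraph (Fin n) | deltaCut (graphonOfGraph G) W ≤ δ} := by
  rw [NCut, Nat.card_eq_fintype_card, Fintype.card_subtype]

lemma logb_NCut_le (hW : Measurable (Function.uncurry W)) (hW01 : ∀ x y, W x y ∈ Icc (0 : ℝ) 1)
    (hP : IsAEPartition unitMeasure P) (hP01 : ∀ i, P i ⊆ Icc (0 : ℝ) 1) {δ : ℝ} (hδ : 0 ≤ δ)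
    {n M : ℕ} (hn : 0 < n) (hM : 0 < M) :
    Real.logb 2 (NCut n δ W) ≤ n * (k * Real.logb 2 (M + 1)) + (n : ℝ) ^ 2 / 2 *
      (graphonEnt (condExpPart P W) +
        htilde ((k : ℝ) ^ 2 * (δ + (M : ℝ)⁻¹) + 2 * (k * (M : ℝ)⁻¹))) := by
  have : Nonempty (Fin n) := ⟨⟨0, hn⟩⟩
  have hM' : (0 : ℝ) < (M : ℝ)⁻¹ := by positivity
  have hblock : ∀ b, blockAverage P W b ∈ Icc (0 : ℝ) 1 := fun b =>
    setAverage_mem_Icc (fun p : ℝ × ℝ => hW01 p.1 p.2) _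
  rw [NCut_eq_card, graphonEnt_condExpPart hP hP01]
  set T : Finset (SimpleGraph (Fin n)) := {G | deltaCut (graphonOfGraph G) W ≤ δ}
  rcases T.eq_empty_or_nonempty with hempty | hne
  · have hlog : 0 ≤ Real.logb 2 ((M : ℝ) + 1) := Real.logb_nonneg one_lt_two (by simp)
    have hent : 0 ≤ ∑ b : Fin k × Fin k,
        unitMeasure.real (P b.1) * unitMeasure.real (P b.2) * binEnt (blockAverage P W b) :=
      Finset.sum_nonneg fun b _ => mul_nonneg (by positivity) (binEnt_nonneg (hblock b))
    have htilde_pos := htilde_nonneg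
      (x := (k : ℝ) ^ 2 * (δ + (M : ℝ)⁻¹) + 2 * (k * (M : ℝ)⁻¹)) (by positivity)
    rw [hempty, Finset.card_empty, Nat.cast_zero, Real.logb_zero]
    positivity
  · have hcoupling : ∀ G ∈ T, ∃ a, IsUniformCoupling (fun i => unitMeasure.real (P i)) a ∧
        blockError (fun i => unitMeasure.real (P i)) a G (blockAverage P W) ≤
          (k : ℝ) ^ 2 * (δ + (M : ℝ)⁻¹) := fun G hG => by
      have hclose : deltaCut (graphonOfGraph G) W < δ + (M : ℝ)⁻¹ :=
        (Finset.mem_filter.1 hG).2.trans_lt (lt_add_of_pos_right _ hM')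
      simpa only [Fintype.card_fin] using exists_coupling_of_deltaCut_lt hW hW01 hP hn hclose
    simpa only [Fintype.card_fin] using
      logb_card_le_of_forall_exists_coupling hne hblock hcoupling hM

end Counting

section Limsup

lemma choose2_pos {n : ℕ} (hn : 2 ≤ n) : 0 < choose2 n := by
  have hn' : (2 : ℝ) ≤ n := mod_cast hn
  exact div_pos (mul_pos (by linarith) (by linarith)) two_pos

lemma tendsto_quadratic_div_choose2 (A L : ℝ) :
    Tendsto (fun n : ℕ => (n * A + (n : ℝ) ^ 2 / 2 * L) / choose2 n) atTop (nhds L) := by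
  have hlim : Tendsto (fun n : ℕ => L + (2 * A + L) / ((n : ℝ) - 1)) atTop (nhds (L + 0)) :=
    tendsto_const_nhds.add <| Tendsto.const_div_atTop
      (tendsto_atTop_add_const_right _ _ tendsto_natCast_atTop_atTop) _
  rw [add_zero] at hlim
  refine hlim.congr' ?_
  filter_upwards [eventually_ge_atTop 2] with n hn
  have hn' : (2 : ℝ) ≤ n := mod_cast hn
  have hn0 : (n : ℝ) ≠ 0 := by linarith
  have hn1 : (n : ℝ) - 1 ≠ 0 := by linarith
  rw [choose2]
  field_simp
  ring

lemma limsup_div_choose2_le {f : ℕ → ℝ} {A L : ℝ} (hf : ∀ n, 0 ≤ f n)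
    (h : ∀ᶠ n : ℕ in atTop, f n ≤ n * A + (n : ℝ) ^ 2 / 2 * L) :
    limsup (fun n => f n / choose2 n) atTop ≤ L := by
  have hlim := tendsto_quadratic_div_choose2 A L
  rw [← hlim.limsup_eq]
  refine limsup_le_limsup ?_ (IsBoundedUnder.isCoboundedUnder_le ⟨0, ?_⟩) hlim.isBoundedUnder_le
  · filter_upwards [h, eventually_ge_atTop 2] with n hfn hn
    exact div_le_div_of_nonneg_right hfn (choose2_pos hn).le
  · rw [eventually_map]
    filter_upwards [eventually_ge_atTop 2] with n hn
    exact div_nonneg (hf n) (choose2_pos hn).le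

end Limsup

theorem stmt7_general (W : ℝ → ℝ → ℝ) (hW : Measurable (Function.uncurry W))
    (hW01 : ∀ x y, W x y ∈ Icc (0 : ℝ) 1) (k : ℕ) (δ : ℝ) (hδ : 0 ≤ δ) (P : Fin k → Set ℝ)
    (hmeas : ∀ i, MeasurableSet (P i)) (hdisj : Pairwise (Function.onFun Disjoint P))
    (hcover : (⋃ i, P i) = Icc (0 : ℝ) 1) :
    limsup (fun n : ℕ => Real.logb 2 (NCut n δ W : ℝ) / choose2 n) atTop ≤
      graphonEnt (condExpPart P W) + htilde ((k : ℝ) ^ 2 * δ) := by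
  have hP := isAEPartition_unitMeasure hmeas hdisj hcover
  have hP01 : ∀ i, P i ⊆ Icc (0 : ℝ) 1 := fun i => hcover ▸ subset_iUnion P i
  have hbound : ∀ M : ℕ, 0 < M →
      limsup (fun n : ℕ => Real.logb 2 (NCut n δ W : ℝ) / choose2 n) atTop ≤
        graphonEnt (condExpPart P W) +
          htilde ((k : ℝ) ^ 2 * (δ + (M : ℝ)⁻¹) + 2 * (k * (M : ℝ)⁻¹)) := fun M hM =>
    limsup_div_choose2_le (fun n => div_nonneg (Real.log_natCast_nonneg _) (by positivity))
      ((eventually_gt_atTop 0).mono fun n hn => logb_NCut_le hW hW01 hP hP01 hδ hn hM)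
  have hcont : Continuous fun t : ℝ => graphonEnt (condExpPart P W) +
      htilde ((k : ℝ) ^ 2 * (δ + t) + 2 * (k * t)) :=
    continuous_const.add (continuous_htilde.comp (by fun_prop))
  have hlim := (hcont.tendsto 0).comp tendsto_inv_atTop_nhds_zero_nat
  simp only [add_zero, mul_zero] at hlim
  exact ge_of_tendsto hlim ((eventually_gt_atTop 0).mono hbound)

/-- Lemma 4.6: for a measurable partition `P` of `[0,1]` into `k` sets of
measure `1/k`, `limsup_n log₂ N_□(n,δ;W)/C(n,2) ≤ Ent(E[W|P]) + h̃(4k²δ)`. -/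
theorem stmt7 (W : ℝ → ℝ → ℝ) (hW : IsGraphon W) (k : ℕ) (hk : 1 ≤ k) (δ : ℝ) (hδ : 0 < δ)
    (P : Fin k → Set ℝ) (hmeas : ∀ i, MeasurableSet (P i))
    (hdisj : Pairwise (Function.onFun Disjoint P))
    (hcover : (⋃ i, P i) = Set.Icc (0:ℝ) 1)
    (hsize : ∀ i, MeasureTheory.volume (P i) = 1 / (k : ENNReal)) :
    Filter.limsup (fun n : ℕ => Real.logb 2 (NCut n δ W : ℝ) / choose2 n) Filter.atTop ≤
      graphonEnt (condExpPart P W) + htilde (4 * (k:ℝ)^2 * δ) := by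
  refine (stmt7_general W hW.2.1 hW.2.2 k δ hδ.le P hmeas hdisj hcover).trans ?_
  exact add_le_add_right (htilde_le_htilde (by positivity) (by nlinarith [sq_nonneg (k : ℝ)])) _

end
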